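/- Let ε > 0 and let U ⊆ ℝ^m be open, and let u be a smooth constrained minimizer of H_ε on U. For a, b ∈ ℝ^{n+1} let a ∧ b denote the skew-symmetric (n+1)×(n+1) matrix with entries (a ∧ b)_{jk} = a_j b_k − a_k b_j. Then u satisfies, pointwise on U and entrywise as matrices, the divergence-form equation: 2 Δ( ∑_α ∂_α( ∂_α u ∧ u ) ) − 4 ∑_α ∂_α( Δu ∧ ∂_α u ) − ε(m+1) ∑_α ∂_α( |∇u|^{m−1} (∂_α u ∧ u) ) = 0. -/

import Mathlib

open MeasureTheory Filter Metric
open scoped ENNReal RealInnerProductSpace Topology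

noncomputable section

/-- The `α`-th partial derivative of a map defined on `ℝ^m`. -/
def pderiv1 {m : ℕ} {F : Type*} [NormedAddCommGroup F] [NormedSpace ℝ F]
    (f : EuclideanSpace ℝ (Fin m) → F) (α : Fin m) (x : EuclideanSpace ℝ (Fin m)) : F :=
  fderiv ℝ f x (EuclideanSpace.single α 1)

/-- The second partial derivative `∂_α ∂_β f`. -/
def pderiv2 {m : ℕ} {F : Type*} [NormedAddCommGroup F] [NormedSpace ℝ F]
    (f : EuclideanSpace ℝ (Fin m) → F) (α β : Fin m) (x : EuclideanSpace ℝ (Fin m)) : F :=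
  pderiv1 (fun y => pderiv1 f β y) α x

/-- The (componentwise) Laplacian `Δf = ∑_α ∂²_{αα} f`. -/
def lap {m : ℕ} {F : Type*} [NormedAddCommGroup F] [NormedSpace ℝ F]
    (f : EuclideanSpace ℝ (Fin m) → F) (x : EuclideanSpace ℝ (Fin m)) : F :=
  ∑ α : Fin m, pderiv2 f α α x

/-- `|∇f|² = ∑_α |∂_α f|²`. -/
def gradSq {m : ℕ} {F : Type*} [NormedAddCommGroup F] [NormedSpace ℝ F]
    (f : EuclideanSpace ℝ (Fin m) → F) (x : EuclideanSpace ℝ (Fin m)) : ℝ :=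
  ∑ α : Fin m, ‖pderiv1 f α x‖ ^ 2

/-- `|∇f|`. -/
def gradNorm {m : ℕ} {F : Type*} [NormedAddCommGroup F] [NormedSpace ℝ F]
    (f : EuclideanSpace ℝ (Fin m) → F) (x : EuclideanSpace ℝ (Fin m)) : ℝ :=
  Real.sqrt (gradSq f x)

/-- The perturbed Hessian energy `H_ε(u, U) = ∫_U |Δu|² + ε |∇u|^{m+1} dx`
(as an extended nonnegative real). -/
def HEnergy {m n : ℕ} (eps : ℝ) (u : EuclideanSpace ℝ (Fin m) → EuclideanSpace ℝ (Fin (n + 1)))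
    (U : Set (EuclideanSpace ℝ (Fin m))) : ℝ≥0∞ :=
  ∫⁻ x in U, ENNReal.ofReal (‖lap u x‖ ^ 2 + eps * gradNorm u x ^ (m + 1))

/-- `u` is a smooth constrained minimizer of `H_ε` on the open set `U`: it is smooth and
sphere-valued on `U`, has finite energy, and minimizes `H_ε(·, U)` among smooth
sphere-valued maps agreeing with `u` outside a compact subset of `U`. -/
def IsHMinimizer {m n : ℕ} (eps : ℝ)
    (u : EuclideanSpace ℝ (Fin m) → EuclideanSpace ℝ (Fin (n + 1)))
    (U : Set (EuclideanSpace ℝ (Fin m))) : Prop :=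
  ContDiffOn ℝ (⊤ : ℕ∞) u U ∧ (∀ x ∈ U, ‖u x‖ = 1) ∧ HEnergy eps u U < ⊤ ∧
    ∀ v : EuclideanSpace ℝ (Fin m) → EuclideanSpace ℝ (Fin (n + 1)),
      ContDiffOn ℝ (⊤ : ℕ∞) v U → (∀ x ∈ U, ‖v x‖ = 1) →
      (∃ K, IsCompact K ∧ K ⊆ U ∧ ∀ x ∉ K, v x = u x) →
      HEnergy eps u U ≤ HEnergy eps v U

/-- The ε-stationarity (first-variation) identity on `U`. -/
def IsStationaryH {m n : ℕ} (eps : ℝ)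
    (u : EuclideanSpace ℝ (Fin m) → EuclideanSpace ℝ (Fin (n + 1)))
    (U : Set (EuclideanSpace ℝ (Fin m))) : Prop :=
  ∀ ξ : EuclideanSpace ℝ (Fin m) → EuclideanSpace ℝ (Fin m),
    ContDiff ℝ (⊤ : ℕ∞) ξ → HasCompactSupport ξ → tsupport ξ ⊆ U →
    ∫ x in U,
      (-((‖lap u x‖ ^ 2 + eps * gradNorm u x ^ (m + 1)) * (∑ α : Fin m, pderiv1 ξ α x α))
        + 4 * (∑ α : Fin m, ∑ β : Fin m, ⟪lap u x, pderiv2 u α β x⟫ * pderiv1 ξ α x β)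
        + 2 * (∑ β : Fin m, ⟪lap u x, pderiv1 u β x⟫ * (∑ α : Fin m, pderiv2 ξ α α x β))
        + eps * (m + 1) * gradNorm u x ^ (m - 1) *
            (∑ α : Fin m, ∑ β : Fin m, ⟪pderiv1 u α x, pderiv1 u β x⟫ * pderiv1 ξ α x β)) = 0

/-- The wedge `a ∧ b` of two vectors in `ℝ^{n+1}`: the skew-symmetric matrix with entries
`(a ∧ b)_{jk} = a_j b_k − a_k b_j`. -/
def wedge {n : ℕ} (a b : EuclideanSpace ℝ (Fin (n + 1))) :
    Fin (n + 1) → Fin (n + 1) → ℝ :=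
  fun j k => a j * b k - a k * b j


section Calculus

variable {m : ℕ} {F G : Type*} [NormedAddCommGroup F] [NormedSpace ℝ F]
  [NormedAddCommGroup G] [NormedSpace ℝ G]

lemma contDiff_pderiv1 {k l : WithTop ℕ∞} {f : EuclideanSpace ℝ (Fin m) → F}
    (hf : ContDiff ℝ l f) (hkl : k + 1 ≤ l) (α : Fin m) : ContDiff ℝ k (pderiv1 f α) :=
  (hf.fderiv_right hkl).clm_apply contDiff_const

lemma contDiff_pderiv1_top {f : EuclideanSpace ℝ (Fin m) → F}
    (hf : ContDiff ℝ (⊤ : ℕ∞) f) (α : Fin m) : ContDiff ℝ (⊤ : ℕ∞) (pderiv1 f α) :=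
  contDiff_pderiv1 hf (by norm_cast) α

lemma contDiff_pderiv2 {f : EuclideanSpace ℝ (Fin m) → F}
    (hf : ContDiff ℝ (⊤ : ℕ∞) f) (α β : Fin m) : ContDiff ℝ (⊤ : ℕ∞) (pderiv2 f α β) :=
  contDiff_pderiv1_top (contDiff_pderiv1_top hf β) α

lemma contDiff_lap {f : EuclideanSpace ℝ (Fin m) → F}
    (hf : ContDiff ℝ (⊤ : ℕ∞) f) : ContDiff ℝ (⊤ : ℕ∞) (lap f) :=
  ContDiff.sum fun α _ => contDiff_pderiv2 hf α α

lemma ContDiff.differentiable_top {f : EuclideanSpace ℝ (Fin m) → F}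
    (hf : ContDiff ℝ (⊤ : ℕ∞) f) : Differentiable ℝ f :=
  hf.differentiable (by simp)

lemma eqOn_pderiv1 {f g : EuclideanSpace ℝ (Fin m) → F} {B : Set (EuclideanSpace ℝ (Fin m))}
    (hB : IsOpen B) (h : Set.EqOn f g B) (α : Fin m) :
    Set.EqOn (pderiv1 f α) (pderiv1 g α) B := fun x hx => by
  have : f =ᶠ[𝓝 x] g := h.eventuallyEq_of_mem (hB.mem_nhds hx)
  simp only [pderiv1, this.fderiv_eq]

lemma eqOn_lap {f g : EuclideanSpace ℝ (Fin m) → F} {B : Set (EuclideanSpace ℝ (Fin m))}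
    (hB : IsOpen B) (h : Set.EqOn f g B) : Set.EqOn (lap f) (lap g) B := fun x hx => by
  simp only [lap, pderiv2]
  exact Finset.sum_congr rfl fun α _ => eqOn_pderiv1 hB (eqOn_pderiv1 hB h α) α hx

lemma eqOn_gradNorm {f g : EuclideanSpace ℝ (Fin m) → F} {B : Set (EuclideanSpace ℝ (Fin m))}
    (hB : IsOpen B) (h : Set.EqOn f g B) : Set.EqOn (gradNorm f) (gradNorm g) B :=
  fun x hx => by
    simp only [gradNorm, gradSq]
    congr 1
    exact Finset.sum_congr rfl fun α _ => by rw [eqOn_pderiv1 hB h α hx]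

lemma pderiv1_clm (L : F →L[ℝ] G) {f : EuclideanSpace ℝ (Fin m) → F}
    {x : EuclideanSpace ℝ (Fin m)} (hf : DifferentiableAt ℝ f x) (α : Fin m) :
    pderiv1 (fun y => L (f y)) α x = L (pderiv1 f α x) := by
  have := (L.hasFDerivAt.comp x hf.hasFDerivAt).fderiv
  simp only [pderiv1]
  change fderiv ℝ (L ∘ f) x _ = _
  rw [this]; rfl

lemma pderiv1_smul {c : EuclideanSpace ℝ (Fin m) → ℝ} {f : EuclideanSpace ℝ (Fin m) → F}
    {x : EuclideanSpace ℝ (Fin m)} (hc : DifferentiableAt ℝ c x) (hf : DifferentiableAt ℝ f x)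
    (α : Fin m) :
    pderiv1 (fun y => c y • f y) α x = c x • pderiv1 f α x + pderiv1 c α x • f x := by
  simp [pderiv1, fderiv_fun_smul hc hf]

lemma pderiv1_add {f g : EuclideanSpace ℝ (Fin m) → F}
    {x : EuclideanSpace ℝ (Fin m)} (hf : DifferentiableAt ℝ f x) (hg : DifferentiableAt ℝ g x)
    (α : Fin m) :
    pderiv1 (fun y => f y + g y) α x = pderiv1 f α x + pderiv1 g α x := by
  simp [pderiv1, fderiv_fun_add hf hg]

lemma pderiv1_const_mul {f : EuclideanSpace ℝ (Fin m) → ℝ}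
    {x : EuclideanSpace ℝ (Fin m)} (hf : DifferentiableAt ℝ f x) (c : ℝ) (α : Fin m) :
    pderiv1 (fun y => c * f y) α x = c * pderiv1 f α x := by
  simp [pderiv1, fderiv_const_mul hf]

lemma integral_mul_pderiv1 {f φ : EuclideanSpace ℝ (Fin m) → ℝ} (hf : ContDiff ℝ 1 f)
    (hφ : ContDiff ℝ 1 φ) (hφc : HasCompactSupport φ) (α : Fin m) :
    ∫ x, f x * pderiv1 φ α x = - ∫ x, pderiv1 f α x * φ x := by
  have hf' : Continuous (pderiv1 f α) := (contDiff_pderiv1 (k := 0) hf (by simp) α).continuous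
  have hφ' : Continuous (pderiv1 φ α) := (contDiff_pderiv1 (k := 0) hφ (by simp) α).continuous
  have hc : HasCompactSupport (pderiv1 φ α) := hφc.fderiv_apply ℝ _
  refine integral_mul_fderiv_eq_neg_fderiv_mul_of_integrable
    ((hf'.mul hφ.continuous).integrable_of_hasCompactSupport hφc.mul_left)
    ((hf.continuous.mul hφ').integrable_of_hasCompactSupport hc.mul_left)
    ((hf.continuous.mul hφ.continuous).integrable_of_hasCompactSupport hφc.mul_left)
    (fun x _ => hf.differentiable one_ne_zero x) (fun x _ => hφ.differentiable one_ne_zero x)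

lemma HasCompactSupport.pderiv1 {φ : EuclideanSpace ℝ (Fin m) → F}
    (hφ : HasCompactSupport φ) (α : Fin m) : HasCompactSupport (pderiv1 φ α) :=
  hφ.fderiv_apply ℝ _

lemma integral_mul_lap {f φ : EuclideanSpace ℝ (Fin m) → ℝ} (hf : ContDiff ℝ (⊤ : ℕ∞) f)
    (hφ : ContDiff ℝ (⊤ : ℕ∞) φ) (hφc : HasCompactSupport φ) :
    ∫ x, f x * lap φ x = ∫ x, lap f x * φ x := by
  simp only [lap, Finset.mul_sum, Finset.sum_mul]
  rw [integral_finsetSum, integral_finsetSum]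
  · refine Finset.sum_congr rfl fun α _ => ?_
    have h1 := contDiff_pderiv1_top hf α
    have h2 := contDiff_pderiv1_top hφ α
    have e1 := integral_mul_pderiv1 (hf.of_le (by simp)) (h2.of_le (by simp)) (hφc.pderiv1 α) α
    have e2 := integral_mul_pderiv1 (h1.of_le (by simp)) (hφ.of_le (by simp)) hφc α
    simp only [pderiv2]
    change ∫ x, f x * pderiv1 (pderiv1 φ α) α x = ∫ x, pderiv1 (pderiv1 f α) α x * φ x
    rw [e1, e2, neg_neg]
  · exact fun α _ => ((contDiff_pderiv2 hf α α).continuous.mul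
      hφ.continuous).integrable_of_hasCompactSupport hφc.mul_left
  · exact fun α _ => (hf.continuous.mul
      (contDiff_pderiv2 hφ α α).continuous).integrable_of_hasCompactSupport
        ((hφc.pderiv1 α).pderiv1 α).mul_left

end Calculus

section NormPow

variable {X : Type*} [NormedAddCommGroup X] [InnerProductSpace ℝ X]

lemma contDiff_norm_smul_self : ContDiff ℝ 1 (fun x : X => ‖x‖ • x) := by
  rw [contDiff_one_iff_hasFDerivAt]
  refine ⟨fun x => ‖x‖ • ContinuousLinearMap.id ℝ X + (‖x‖⁻¹ • innerSL ℝ x).smulRight x,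
    ?_, fun x => ?_⟩
  · rw [continuous_iff_continuousAt]
    intro x
    refine ContinuousAt.add (by fun_prop) ?_
    by_cases hx : x = 0
    · subst hx
      have h0 : (‖(0 : X)‖⁻¹ • innerSL ℝ (0 : X)).smulRight (0 : X) = 0 := by ext; simp
      rw [ContinuousAt, h0]
      refine squeeze_zero_norm (a := fun y : X => ‖y‖) (fun y => ?_) ?_
      · rw [ContinuousLinearMap.norm_smulRight_apply, norm_smul, innerSL_apply_norm]
        rcases eq_or_ne y 0 with rfl | hy
        · simp
        · simp [hy]
      · simpa using (continuous_norm (E := X)).tendsto 0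
    · have h1 : ContinuousAt (fun y : X => ‖y‖⁻¹ • innerSL ℝ y) x :=
        ((continuous_norm.continuousAt).inv₀ (by simpa using hx)).smul
          (innerSL ℝ (E := X)).continuous.continuousAt
      exact ((ContinuousLinearMap.smulRightL ℝ X X).continuous₂.continuousAt).comp
        (h1.prodMk continuousAt_id)
  · by_cases hx : x = 0
    · subst hx
      refine .of_isLittleO ?_
      simp only [norm_zero, zero_smul, map_zero, ContinuousLinearMap.smulRight_zero, sub_zero,
        add_zero, zero_apply]
      rw [← Asymptotics.isLittleO_norm_left, ← Asymptotics.isLittleO_norm_right]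
      simp only [norm_smul, norm_norm]
      have : (fun y : X => ‖y‖ * ‖y‖) =o[𝓝 0] fun y : X => (1 : ℝ) * ‖y‖ := by
        refine Asymptotics.IsLittleO.mul_isBigO ?_ (Asymptotics.isBigO_refl _ _)
        rw [Asymptotics.isLittleO_one_iff]
        simpa using (continuous_norm (E := X)).tendsto 0
      simpa using this
    · have h := (hasStrictFDerivAt_norm_sq x).hasFDerivAt.sqrt (by simpa using hx)
      simp only [Real.sqrt_sq (norm_nonneg _)] at h
      refine (h.smul (hasFDerivAt_id x)).congr_fderiv ?_
      ext y
      simp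
      congr 1
      ring

lemma contDiff_norm_pow_smul_self {k : ℕ} (hk : 1 ≤ k) :
    ContDiff ℝ 1 (fun x : X => ‖x‖ ^ k • x) := by
  rcases hk.eq_or_lt with rfl | hk
  · simpa using contDiff_norm_smul_self (X := X)
  · have := (contDiff_norm_rpow (E := X) (p := k) (by exact_mod_cast hk)).smul contDiff_id
    simp only [Real.rpow_natCast] at this
    exact this

lemma HasDerivAt.sqrt_pow {f : ℝ → ℝ} {c t : ℝ} {k : ℕ} (hf0 : ∀ s, 0 ≤ f s)
    (hf : HasDerivAt f (2 * c) t) :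
    HasDerivAt (fun s => √(f s) ^ (k + 2)) ((k + 2) * √(f t) ^ k * c) t := by
  have key : ∀ (j : ℕ) s, √(f s) ^ j = f s ^ ((j : ℝ) / 2) := fun j s => by
    rw [Real.sqrt_eq_rpow, ← Real.rpow_mul_natCast (hf0 s)]; ring_nf
  simp only [key]
  refine (hf.rpow_const (p := ((k + 2 : ℕ) : ℝ) / 2) (Or.inr ?_)).congr_deriv ?_
  · push_cast; linarith [(Nat.cast_nonneg k : (0 : ℝ) ≤ k)]
  · have : ((k + 2 : ℕ) : ℝ) / 2 - 1 = (k : ℝ) / 2 := by push_cast; ring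
    rw [this]; push_cast; ring

end NormPow

section Rotation

variable {V : Type*} [NormedAddCommGroup V] [InnerProductSpace ℝ V]

/-- The one-parameter family `1 + (1 - cos s) J² + (sin s) J`, which is the rotation group
`exp (s J)` when `J³ = -J`. -/
def rotate (J : V →L[ℝ] V) (s : ℝ) : V →L[ℝ] V :=
  ContinuousLinearMap.id ℝ V + (1 - Real.cos s) • J.comp J + Real.sin s • J

lemma rotate_apply (J : V →L[ℝ] V) (s : ℝ) (a : V) :
    rotate J s a = a + (1 - Real.cos s) • J (J a) + Real.sin s • J a := rfl

lemma rotate_zero (J : V →L[ℝ] V) (a : V) : rotate J 0 a = a := by simp [rotate_apply]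

lemma norm_rotate {J : V →L[ℝ] V} (hskew : ∀ a b, ⟪a, J b⟫ = -⟪J a, b⟫)
    (hcube : ∀ a, J (J (J a)) = -J a) (s : ℝ) (a : V) : ‖rotate J s a‖ = ‖a‖ := by
  have h0 : ∀ b, ⟪b, J b⟫ = 0 := fun b => by
    have := hskew b b
    rw [real_inner_comm] at this
    rw [real_inner_comm]; linarith
  have h1 : ⟪a, J (J a)⟫ = -⟪J a, J a⟫ := hskew a (J a)
  have h2 : ⟪J (J a), J (J a)⟫ = ⟪J a, J a⟫ := by
    rw [hskew, hcube, inner_neg_left, neg_neg]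
  have h3 : ⟪J (J a), J a⟫ = 0 := by rw [real_inner_comm]; exact h0 (J a)
  have h4 : ⟪a, J a⟫ = 0 := h0 a
  have hsq : ⟪rotate J s a, rotate J s a⟫ = ⟪a, a⟫ := by
    rw [rotate_apply]
    simp only [inner_add_left, inner_add_right, inner_smul_left, inner_smul_right]
    rw [real_inner_comm a (J (J a)), real_inner_comm a (J a), real_inner_comm (J (J a)) (J a),
      h1, h2, h3, h4]
    simp only [conj_trivial]
    linear_combination ⟪J a, J a⟫ * Real.sin_sq_add_cos_sq s
  rw [real_inner_self_eq_norm_sq, real_inner_self_eq_norm_sq] at hsq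
  exact (sq_eq_sq₀ (norm_nonneg _) (norm_nonneg _)).1 hsq

variable {m : ℕ}

lemma ContDiffAt.rotate {k : WithTop ℕ∞} (J : V →L[ℝ] V) {θ : EuclideanSpace ℝ (Fin m) → ℝ}
    {w : EuclideanSpace ℝ (Fin m) → V} {x : EuclideanSpace ℝ (Fin m)}
    (hθ : ContDiffAt ℝ k θ x) (hw : ContDiffAt ℝ k w x) :
    ContDiffAt ℝ k (fun y => rotate J (θ y) (w y)) x := by
  simp only [rotate_apply]
  have hJ : ContDiffAt ℝ k (fun y => J (w y)) x := J.contDiff.contDiffAt.comp x hw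
  have hJJ : ContDiffAt ℝ k (fun y => J (J (w y))) x := J.contDiff.contDiffAt.comp x hJ
  exact (hw.add ((contDiffAt_const.sub hθ.cos).smul hJJ)).add (hθ.sin.smul hJ)

lemma pderiv1_rotate {J : V →L[ℝ] V} (hcube : ∀ a, J (J (J a)) = -J a)
    {θ : EuclideanSpace ℝ (Fin m) → ℝ} {w : EuclideanSpace ℝ (Fin m) → V}
    (hθ : Differentiable ℝ θ) (hw : Differentiable ℝ w) (α : Fin m) :
    pderiv1 (fun y => rotate J (θ y) (w y)) α =
      fun x => rotate J (θ x) (pderiv1 w α x + pderiv1 θ α x • J (w x)) := by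
  funext x
  simp only [rotate_apply]
  have hJ : Differentiable ℝ (fun y => J (w y)) := J.differentiable.comp hw
  have hJJ : Differentiable ℝ (fun y => J (J (w y))) := J.differentiable.comp hJ
  have hc : Differentiable ℝ (fun y => 1 - Real.cos (θ y)) := (differentiable_const _).sub hθ.cos
  have hs : Differentiable ℝ (fun y => Real.sin (θ y)) := hθ.sin
  have ec : pderiv1 (fun y => 1 - Real.cos (θ y)) α x = Real.sin (θ x) * pderiv1 θ α x := by
    have := ((hθ x).hasFDerivAt.cos.const_sub 1).fderiv
    simp [pderiv1, this]
  have es : pderiv1 (fun y => Real.sin (θ y)) α x = Real.cos (θ x) * pderiv1 θ α x := by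
    have := (hθ x).hasFDerivAt.sin.fderiv
    simp [pderiv1, this]
  rw [pderiv1_add ((hw x).fun_add ((hc x).fun_smul (hJJ x))) ((hs x).fun_smul (hJ x)),
    pderiv1_add (hw x) ((hc x).fun_smul (hJJ x)), pderiv1_smul (hc x) (hJJ x),
    pderiv1_smul (hs x) (hJ x), pderiv1_clm J (hJ x), pderiv1_clm J (hw x), ec, es]
  simp only [map_add, map_smul, hcube]
  module

lemma norm_pderiv1_rotate {J : V →L[ℝ] V} (hskew : ∀ a b, ⟪a, J b⟫ = -⟪J a, b⟫)
    (hcube : ∀ a, J (J (J a)) = -J a)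
    {φ : EuclideanSpace ℝ (Fin m) → ℝ} {w : EuclideanSpace ℝ (Fin m) → V}
    (hφ : ContDiff ℝ (⊤ : ℕ∞) φ) (hw : ContDiff ℝ (⊤ : ℕ∞) w) (t : ℝ) (α : Fin m)
    (x : EuclideanSpace ℝ (Fin m)) :
    ‖pderiv1 (fun y => rotate J (t * φ y) (w y)) α x‖ =
      ‖pderiv1 w α x + t • pderiv1 φ α x • J (w x)‖ := by
  rw [pderiv1_rotate hcube (hφ.differentiable_top.const_mul t) hw.differentiable_top]
  simp only [norm_rotate hskew hcube, pderiv1_const_mul (hφ.differentiable_top x), mul_smul]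

lemma norm_lap_rotate {J : V →L[ℝ] V} (hskew : ∀ a b, ⟪a, J b⟫ = -⟪J a, b⟫)
    (hcube : ∀ a, J (J (J a)) = -J a)
    {φ : EuclideanSpace ℝ (Fin m) → ℝ} {w : EuclideanSpace ℝ (Fin m) → V}
    (hφ : ContDiff ℝ (⊤ : ℕ∞) φ) (hw : ContDiff ℝ (⊤ : ℕ∞) w) (t : ℝ)
    (x : EuclideanSpace ℝ (Fin m)) :
    ‖lap (fun y => rotate J (t * φ y) (w y)) x‖ =
      ‖lap w x + t • (lap φ x • J (w x) + (2 : ℝ) • ∑ α, pderiv1 φ α x • J (pderiv1 w α x))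
        + t ^ 2 • (∑ α, pderiv1 φ α x ^ 2) • J (J (w x))‖ := by
  have hθ : Differentiable ℝ (fun y => t * φ y) := hφ.differentiable_top.const_mul t
  have hJ : Differentiable ℝ (fun y => J (w y)) := J.differentiable.comp hw.differentiable_top
  have key : lap (fun y => rotate J (t * φ y) (w y)) x = rotate J (t * φ x)
      (lap w x + t • (lap φ x • J (w x) + (2 : ℝ) • ∑ α, pderiv1 φ α x • J (pderiv1 w α x))
        + t ^ 2 • (∑ α, pderiv1 φ α x ^ 2) • J (J (w x))) := by
    simp only [lap, pderiv2, Finset.smul_sum, Finset.sum_smul, ← Finset.sum_add_distrib]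
    rw [map_sum]
    refine Finset.sum_congr rfl fun α _ => ?_
    have hwα := (contDiff_pderiv1_top hw α).differentiable_top
    have hφα := (contDiff_pderiv1_top hφ α).differentiable_top
    have hθα : Differentiable ℝ (fun y => t * pderiv1 φ α y) := hφα.const_mul t
    rw [pderiv1_rotate hcube hθ hw.differentiable_top]
    simp only [pderiv1_const_mul (hφ.differentiable_top _)]
    rw [pderiv1_rotate hcube hθ (hwα.fun_add (hθα.fun_smul hJ))]
    beta_reduce
    rw [pderiv1_add (hwα x) ((hθα x).fun_smul (hJ x)), pderiv1_smul (hθα x) (hJ x),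
      pderiv1_clm J (hw.differentiable_top x), pderiv1_const_mul (hφα x),
      pderiv1_const_mul (hφ.differentiable_top x)]
    congr 1
    simp only [map_add, map_smul]
    module
  rw [key, norm_rotate hskew hcube]

end Rotation

section FirstVariation

variable {m : ℕ}

lemma integrableOn_of_isBounded {g : EuclideanSpace ℝ (Fin m) → ℝ} (hg : Continuous g)
    {B : Set (EuclideanSpace ℝ (Fin m))} (hB : Bornology.IsBounded B) : IntegrableOn g B :=
  (hg.continuousOn.integrableOn_compact hB.isCompact_closure).mono_set subset_closure

lemma hasDerivAt_setIntegral {f f' : ℝ → EuclideanSpace ℝ (Fin m) → ℝ}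
    (hf : ∀ t, Continuous (f t))
    (hf' : Continuous fun p : ℝ × EuclideanSpace ℝ (Fin m) => f' p.1 p.2)
    (hd : ∀ t x, HasDerivAt (f · x) (f' t x) t)
    {B : Set (EuclideanSpace ℝ (Fin m))} (hBm : MeasurableSet B) (hB : Bornology.IsBounded B) :
    HasDerivAt (fun t => ∫ x in B, f t x) (∫ x in B, f' 0 x) 0 := by
  obtain ⟨C, hC⟩ := ((isCompact_closedBall (0 : ℝ) 1).prod
    hB.isCompact_closure).exists_bound_of_continuousOn hf'.continuousOn
  refine (hasDerivAt_integral_of_dominated_loc_of_deriv_le (bound := fun _ => C)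
    (closedBall_mem_nhds (0 : ℝ) one_pos) (.of_forall fun t => (hf t).aestronglyMeasurable)
    (integrableOn_of_isBounded (hf 0) hB) ?_ ?_ (integrableOn_of_isBounded continuous_const hB)
    (.of_forall fun x t _ => hd t x)).2
  · exact (hf'.comp (by fun_prop : Continuous fun x => ((0 : ℝ), x))).aestronglyMeasurable
  · filter_upwards [ae_restrict_mem hBm] with x hx t ht
    exact hC (t, x) ⟨ht, subset_closure hx⟩

lemma eq_zero_of_weak_divergence {P : EuclideanSpace ℝ (Fin m) → ℝ}
    {R : Fin m → EuclideanSpace ℝ (Fin m) → ℝ} (hP : ContDiff ℝ (⊤ : ℕ∞) P)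
    (hR : ∀ α, ContDiff ℝ 1 (R α)) {B : Set (EuclideanSpace ℝ (Fin m))} (hB : IsOpen B)
    (h : ∀ φ : EuclideanSpace ℝ (Fin m) → ℝ, ContDiff ℝ (⊤ : ℕ∞) φ → HasCompactSupport φ →
      tsupport φ ⊆ B → ∫ x, (2 * (P x * lap φ x) + ∑ α, R α x * pderiv1 φ α x) = 0) :
    ∀ x ∈ B, 2 * lap P x - ∑ α, pderiv1 (R α) α x = 0 := by
  have hR' : ∀ α, Continuous (pderiv1 (R α) α) := fun α =>
    (contDiff_pderiv1 (k := 0) (hR α) (by simp) α).continuous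
  have hcont : Continuous fun x => 2 * lap P x - ∑ α, pderiv1 (R α) α x :=
    (continuous_const.mul (contDiff_lap hP).continuous).sub
      (continuous_finsetSum _ fun α _ => hR' α)
  have hae := hB.ae_eq_zero_of_integral_contDiff_smul_eq_zero (μ := volume)
    (hcont.locallyIntegrable.locallyIntegrableOn B) (fun φ hφ hφc hφB => ?_)
  · exact Measure.eqOn_open_of_ae_eq ((ae_restrict_iff' hB.measurableSet).2 hae) hB
      hcont.continuousOn continuousOn_const
  · have hlapc : HasCompactSupport (lap φ) := by
      have : lap φ = ∑ α, pderiv2 φ α α := by ext x; simp [lap]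
      rw [this]
      exact HasCompactSupport.finset_sum fun α _ => (hφc.pderiv1 α).pderiv1 α
    have i1 : Integrable fun x => P x * lap φ x :=
      (hP.continuous.mul (contDiff_lap hφ).continuous).integrable_of_hasCompactSupport
        hlapc.mul_left
    have i2 : ∀ α, Integrable fun x => R α x * pderiv1 φ α x := fun α =>
      ((hR α).continuous.mul (contDiff_pderiv1_top hφ α).continuous).integrable_of_hasCompactSupport
        (hφc.pderiv1 α).mul_left
    have i3 : Integrable fun x => lap P x * φ x :=
      ((contDiff_lap hP).continuous.mul hφ.continuous).integrable_of_hasCompactSupport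
        hφc.mul_left
    have i4 : ∀ α, Integrable fun x => pderiv1 (R α) α x * φ x := fun α =>
      ((hR' α).mul hφ.continuous).integrable_of_hasCompactSupport hφc.mul_left
    have e := h φ hφ hφc hφB
    rw [integral_add (i1.const_mul 2) (integrable_finsetSum _ fun α _ => i2 α),
      integral_const_mul, integral_finsetSum _ fun α _ => i2 α, integral_mul_lap hP hφ hφc,
      Finset.sum_congr rfl fun α _ =>
        integral_mul_pderiv1 (hR α) (hφ.of_le (by simp)) hφc α] at e
    have : ∀ x, φ x • (2 * lap P x - ∑ α, pderiv1 (R α) α x) =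
        2 * (lap P x * φ x) - ∑ α, pderiv1 (R α) α x * φ x := fun x => by
      rw [smul_eq_mul, ← Finset.sum_mul]; ring
    simp only [this]
    rw [integral_sub (i3.const_mul 2) (integrable_finsetSum _ fun α _ => i4 α),
      integral_const_mul, integral_finsetSum _ fun α _ => i4 α]
    rw [Finset.sum_neg_distrib] at e
    linarith

variable {V : Type*} [NormedAddCommGroup V] [InnerProductSpace ℝ V]

/-- The integrand `|Δu|² + ε |∇u|^{m+1}` of the energy `H_ε`. -/
def energyDensity (eps : ℝ) (u : EuclideanSpace ℝ (Fin m) → V)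
    (x : EuclideanSpace ℝ (Fin m)) : ℝ :=
  ‖lap u x‖ ^ 2 + eps * gradNorm u x ^ (m + 1)

lemma energyDensity_nonneg {eps : ℝ} (heps : 0 < eps) (u : EuclideanSpace ℝ (Fin m) → V)
    (x : EuclideanSpace ℝ (Fin m)) : 0 ≤ energyDensity eps u x := by
  have : 0 ≤ gradNorm u x := Real.sqrt_nonneg _
  unfold energyDensity
  positivity

lemma continuous_gradNorm {u : EuclideanSpace ℝ (Fin m) → V} (hu : ContDiff ℝ (⊤ : ℕ∞) u) :
    Continuous (gradNorm u) :=
  Real.continuous_sqrt.comp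
    (continuous_finsetSum _ fun α _ => ((contDiff_pderiv1_top hu α).continuous.norm).pow 2)

lemma continuous_energyDensity (eps : ℝ) {u : EuclideanSpace ℝ (Fin m) → V}
    (hu : ContDiff ℝ (⊤ : ℕ∞) u) : Continuous (energyDensity eps u) :=
  (((contDiff_lap hu).continuous.norm).pow 2).add
    (continuous_const.mul ((continuous_gradNorm hu).pow _))

lemma hasDerivAt_norm_quadratic_sq (a b c : V) (t : ℝ) :
    HasDerivAt (fun s : ℝ => ‖a + s • b + s ^ 2 • c‖ ^ 2)
      (2 * ⟪a + t • b + t ^ 2 • c, b + (2 * t) • c⟫) t := by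
  have h1 : HasDerivAt (fun s : ℝ => a + s • b + s ^ 2 • c) (b + (2 * t) • c) t := by
    have := (((hasDerivAt_id t).smul_const b).const_add a).add
      (((hasDerivAt_id t).pow 2).smul_const c)
    refine this.congr_deriv ?_
    simp
  exact h1.norm_sq

lemma hasDerivAt_norm_affine_sq (a b : V) (t : ℝ) :
    HasDerivAt (fun s : ℝ => ‖a + s • b‖ ^ 2) (2 * ⟪a + t • b, b⟫) t := by
  simpa using hasDerivAt_norm_quadratic_sq a b 0 t

lemma first_variation_rotate (hm : 1 ≤ m) (eps : ℝ) {J : V →L[ℝ] V}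
    (hskew : ∀ a b, ⟪a, J b⟫ = -⟪J a, b⟫) (hcube : ∀ a, J (J (J a)) = -J a)
    {φ : EuclideanSpace ℝ (Fin m) → ℝ} {w : EuclideanSpace ℝ (Fin m) → V}
    (hφ : ContDiff ℝ (⊤ : ℕ∞) φ) (hw : ContDiff ℝ (⊤ : ℕ∞) w)
    {B : Set (EuclideanSpace ℝ (Fin m))} (hBm : MeasurableSet B) (hB : Bornology.IsBounded B)
    (hmin : ∀ t : ℝ, ∫ x in B, energyDensity eps w x ≤
      ∫ x in B, energyDensity eps (fun y => rotate J (t * φ y) (w y)) x) :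
    ∫ x in B, (2 * (⟪lap w x, J (w x)⟫ * lap φ x) +
      ∑ α, (4 * ⟪lap w x, J (pderiv1 w α x)⟫ +
        eps * (m + 1) * (gradNorm w x ^ (m - 1) * ⟪pderiv1 w α x, J (w x)⟫)) *
          pderiv1 φ α x) = 0 := by
  obtain ⟨k, rfl⟩ : ∃ k, m = k + 1 := ⟨m - 1, by omega⟩
  set b := fun x => lap φ x • J (w x) + (2 : ℝ) • ∑ α, pderiv1 φ α x • J (pderiv1 w α x) with hb
  set c := fun x => (∑ α, pderiv1 φ α x ^ 2) • J (J (w x)) with hc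
  set d := fun α x => pderiv1 φ α x • J (w x) with hd
  have hwc := hw.continuous
  have hw1 := fun α => (contDiff_pderiv1_top hw α).continuous
  have hw2 := (contDiff_lap hw).continuous
  have hφ1 := fun α => (contDiff_pderiv1_top hφ α).continuous
  have hφ2 := (contDiff_lap hφ).continuous
  have hbc : Continuous b := by fun_prop
  have hcc : Continuous c := by fun_prop
  have hdc : ∀ α, Continuous (d α) := fun α => by fun_prop
  have hdens : ∀ t x, energyDensity eps (fun y => rotate J (t * φ y) (w y)) x =
      ‖lap w x + t • b x + t ^ 2 • c x‖ ^ 2 +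
        eps * √(∑ α, ‖pderiv1 w α x + t • d α x‖ ^ 2) ^ (k + 2) := fun t x => by
    simp only [energyDensity, gradNorm, gradSq, norm_lap_rotate hskew hcube hφ hw,
      norm_pderiv1_rotate hskew hcube hφ hw]
    rfl
  have hder := hasDerivAt_setIntegral (f := fun t x => ‖lap w x + t • b x + t ^ 2 • c x‖ ^ 2 +
        eps * √(∑ α, ‖pderiv1 w α x + t • d α x‖ ^ 2) ^ (k + 2))
    (f' := fun t x => 2 * ⟪lap w x + t • b x + t ^ 2 • c x, b x + (2 * t) • c x⟫ +
      eps * ((k + 2) * √(∑ α, ‖pderiv1 w α x + t • d α x‖ ^ 2) ^ k *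
        ∑ α, ⟪pderiv1 w α x + t • d α x, d α x⟫))
    (fun t => by fun_prop) (by fun_prop) (fun t x => by
      refine (hasDerivAt_norm_quadratic_sq _ _ _ t).add (HasDerivAt.const_mul eps ?_)
      refine HasDerivAt.sqrt_pow (fun s => by positivity) ?_
      rw [Finset.mul_sum]
      exact HasDerivAt.fun_sum fun α _ => hasDerivAt_norm_affine_sq _ _ t) hBm hB
  have hlm : IsLocalMin (fun t : ℝ => ∫ x in B, (‖lap w x + t • b x + t ^ 2 • c x‖ ^ 2 +
        eps * √(∑ α, ‖pderiv1 w α x + t • d α x‖ ^ 2) ^ (k + 2))) 0 := by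
    refine .of_forall fun t => ?_
    have := hmin t
    simp only [hdens] at this
    refine le_trans (le_of_eq ?_) this
    refine integral_congr_ae (.of_forall fun x => ?_)
    simp [energyDensity, gradNorm, gradSq]
  rw [← hlm.hasDerivAt_eq_zero hder]
  refine integral_congr_ae (.of_forall fun x => ?_)
  simp only [hb, hd, zero_smul, add_zero, mul_zero, zero_pow two_ne_zero, inner_add_right,
    inner_smul_right, inner_sum, Finset.mul_sum, add_mul, Finset.sum_add_distrib, gradNorm, gradSq,
    Nat.add_sub_cancel, mul_add]
  push_cast
  rw [add_assoc]
  congr 1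
  · ring
  · congr 1
    · exact Finset.sum_congr rfl fun α _ => by ring
    · simp only [← Finset.sum_add_distrib]
      exact Finset.sum_congr rfl fun α _ => by ring

lemma contDiff_gradNorm_pow_mul_inner {w : EuclideanSpace ℝ (Fin m) → V}
    (hw : ContDiff ℝ (⊤ : ℕ∞) w) {f : EuclideanSpace ℝ (Fin m) → V} (hf : ContDiff ℝ 1 f)
    {k : ℕ} (hk : 1 ≤ k) (α : Fin m) :
    ContDiff ℝ 1 (fun x => gradNorm w x ^ k * ⟪pderiv1 w α x, f x⟫) := by
  let W : EuclideanSpace ℝ (Fin m) → PiLp 2 (fun _ : Fin m => V) :=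
    fun x => WithLp.toLp 2 fun β => pderiv1 w β x
  have hW : ContDiff ℝ 1 W := (contDiff_piLp 2).2 fun β =>
    (contDiff_pderiv1_top hw β).of_le (by simp)
  have hnorm : ∀ x, gradNorm w x = ‖W x‖ := fun x => by
    rw [PiLp.norm_eq_of_L2]; rfl
  have h1 : ContDiff ℝ 1 (fun x => (‖W x‖ ^ k • W x) α) :=
    (contDiff_piLp 2).1 ((contDiff_norm_pow_smul_self hk).comp hW) α
  have h2 := h1.inner ℝ hf
  simpa only [PiLp.smul_apply, real_inner_smul_left, ← hnorm] using h2

lemma euler_lagrange_of_rotate_minimal (hm : 2 ≤ m) (eps : ℝ) {J : V →L[ℝ] V}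
    (hskew : ∀ a b, ⟪a, J b⟫ = -⟪J a, b⟫) (hcube : ∀ a, J (J (J a)) = -J a)
    {w : EuclideanSpace ℝ (Fin m) → V} (hw : ContDiff ℝ (⊤ : ℕ∞) w)
    {B : Set (EuclideanSpace ℝ (Fin m))} (hBo : IsOpen B) (hB : Bornology.IsBounded B)
    (hmin : ∀ φ : EuclideanSpace ℝ (Fin m) → ℝ, ContDiff ℝ (⊤ : ℕ∞) φ → HasCompactSupport φ →
      tsupport φ ⊆ B → ∫ x in B, energyDensity eps w x ≤
        ∫ x in B, energyDensity eps (fun y => rotate J (φ y) (w y)) x) :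
    ∀ x ∈ B, 2 * lap (fun y => ⟪lap w y, J (w y)⟫) x -
      4 * ∑ α, pderiv1 (fun y => ⟪lap w y, J (pderiv1 w α y)⟫) α x -
      eps * (m + 1) *
        ∑ α, pderiv1 (fun y => gradNorm w y ^ (m - 1) * ⟪pderiv1 w α y, J (w y)⟫) α x = 0 := by
  have hJw : ContDiff ℝ (⊤ : ℕ∞) (fun y => J (w y)) := J.contDiff.comp hw
  have hP : ContDiff ℝ (⊤ : ℕ∞) (fun y => ⟪lap w y, J (w y)⟫) := (contDiff_lap hw).inner ℝ hJw
  have hQ : ∀ α, ContDiff ℝ 1 (fun y => ⟪lap w y, J (pderiv1 w α y)⟫) := fun α =>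
    ((contDiff_lap hw).inner ℝ (J.contDiff.comp (contDiff_pderiv1_top hw α))).of_le (by simp)
  have hS : ∀ α, ContDiff ℝ 1
      (fun y => gradNorm w y ^ (m - 1) * ⟪pderiv1 w α y, J (w y)⟫) := fun α =>
    contDiff_gradNorm_pow_mul_inner hw (hJw.of_le (by simp)) (by omega) α
  have hR : ∀ α, ContDiff ℝ 1 (fun y => 4 * ⟪lap w y, J (pderiv1 w α y)⟫ +
      eps * (m + 1) * (gradNorm w y ^ (m - 1) * ⟪pderiv1 w α y, J (w y)⟫)) := fun α =>
    (contDiff_const.mul (hQ α)).add (contDiff_const.mul (hS α))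
  intro x hx
  have key := eq_zero_of_weak_divergence hP hR hBo (fun φ hφ hφc hφB => ?_) x hx
  · have hsplit : ∀ α, pderiv1 (fun y => 4 * ⟪lap w y, J (pderiv1 w α y)⟫ +
        eps * (m + 1) * (gradNorm w y ^ (m - 1) * ⟪pderiv1 w α y, J (w y)⟫)) α x =
        4 * pderiv1 (fun y => ⟪lap w y, J (pderiv1 w α y)⟫) α x + eps * (m + 1) *
          pderiv1 (fun y => gradNorm w y ^ (m - 1) * ⟪pderiv1 w α y, J (w y)⟫) α x := fun α => by
      have dQ := (hQ α).differentiable one_ne_zero x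
      have dS := (hS α).differentiable one_ne_zero x
      rw [pderiv1_add (dQ.const_mul 4) (dS.const_mul _), pderiv1_const_mul dQ,
        pderiv1_const_mul dS]
    simp only [hsplit, Finset.sum_add_distrib, ← Finset.mul_sum] at key
    linarith
  · rw [← first_variation_rotate (by omega) eps hskew hcube hφ hw hBo.measurableSet hB
      fun t => hmin _ (contDiff_const.mul hφ) hφc.mul_left
        ((closure_mono (Function.support_mul_subset_right _ _)).trans hφB)]
    refine (setIntegral_eq_integral_of_forall_compl_eq_zero fun y hy => ?_).symm
    have hφ0 : Set.EqOn φ (fun _ => 0) (tsupport φ)ᶜ := fun z hz =>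
      image_eq_zero_of_notMem_tsupport hz
    have hy' : y ∈ (tsupport φ)ᶜ := fun h => hy (hφB h)
    have ho : IsOpen (tsupport φ)ᶜ := (isClosed_tsupport φ).isOpen_compl
    have e1 : lap φ y = 0 := by rw [eqOn_lap ho hφ0 hy']; simp [lap, pderiv2, pderiv1]
    have e2 : ∀ α, pderiv1 φ α y = 0 := fun α => by
      rw [eqOn_pderiv1 ho hφ0 α hy']; simp [pderiv1]
    simp [e1, e2]

end FirstVariation

section Wedge

variable {m n : ℕ}

/-- The infinitesimal rotation in the `(j, k)` coordinate plane. -/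
def planeRotation (j k : Fin (n + 1)) :
    EuclideanSpace ℝ (Fin (n + 1)) →L[ℝ] EuclideanSpace ℝ (Fin (n + 1)) :=
  (EuclideanSpace.proj k : EuclideanSpace ℝ (Fin (n + 1)) →L[ℝ] ℝ).smulRight
      (EuclideanSpace.single j 1) -
    (EuclideanSpace.proj j : EuclideanSpace ℝ (Fin (n + 1)) →L[ℝ] ℝ).smulRight
      (EuclideanSpace.single k 1)

lemma planeRotation_apply (j k : Fin (n + 1)) (a : EuclideanSpace ℝ (Fin (n + 1))) :
    planeRotation j k a = a k • EuclideanSpace.single j 1 - a j • EuclideanSpace.single k 1 :=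
  rfl

lemma inner_planeRotation (j k : Fin (n + 1)) (a b : EuclideanSpace ℝ (Fin (n + 1))) :
    ⟪a, planeRotation j k b⟫ = wedge a b j k := by
  simp [planeRotation_apply, inner_sub_right, inner_smul_right, EuclideanSpace.inner_single_right,
    wedge]
  ring

lemma planeRotation_skew (j k : Fin (n + 1)) (a b : EuclideanSpace ℝ (Fin (n + 1))) :
    ⟪a, planeRotation j k b⟫ = -⟪planeRotation j k a, b⟫ := by
  rw [real_inner_comm, real_inner_comm b, inner_planeRotation, real_inner_comm,
    inner_planeRotation]
  simp only [wedge]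
  ring

lemma planeRotation_cube (j k : Fin (n + 1)) (a : EuclideanSpace ℝ (Fin (n + 1))) :
    planeRotation j k (planeRotation j k (planeRotation j k a)) = -planeRotation j k a := by
  rcases eq_or_ne j k with rfl | h
  · simp [planeRotation_apply]
  · simp [planeRotation_apply, h, h.symm]
    abel

lemma contDiff_wedge {l : WithTop ℕ∞}
    {f g : EuclideanSpace ℝ (Fin m) → EuclideanSpace ℝ (Fin (n + 1))}
    (hf : ContDiff ℝ l f) (hg : ContDiff ℝ l g) :
    ContDiff ℝ l (fun x => wedge (f x) (g x)) :=
  contDiff_pi.2 fun j => contDiff_pi.2 fun k => by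
    simp only [← inner_planeRotation]
    exact hf.inner ℝ ((planeRotation j k).contDiff.comp hg)

lemma pderiv1_apply_apply {ι κ : Type*} [Fintype ι] [Fintype κ]
    {M : EuclideanSpace ℝ (Fin m) → ι → κ → ℝ}
    {x : EuclideanSpace ℝ (Fin m)} (hM : DifferentiableAt ℝ M x) (α : Fin m) (j : ι) (k : κ) :
    pderiv1 M α x j k = pderiv1 (fun y => M y j k) α x :=
  (pderiv1_clm ((ContinuousLinearMap.proj (R := ℝ) (φ := fun _ : κ => ℝ) k).comp
    (ContinuousLinearMap.proj (R := ℝ) (φ := fun _ : ι => κ → ℝ) j)) hM α).symm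

lemma lap_apply_apply {ι κ : Type*} [Fintype ι] [Fintype κ]
    {M : EuclideanSpace ℝ (Fin m) → ι → κ → ℝ}
    (hM : ContDiff ℝ (⊤ : ℕ∞) M) (x : EuclideanSpace ℝ (Fin m)) (j : ι) (k : κ) :
    lap M x j k = lap (fun y => M y j k) x := by
  simp only [lap, pderiv2, Finset.sum_apply]
  refine Finset.sum_congr rfl fun α _ => ?_
  rw [pderiv1_apply_apply ((contDiff_pderiv1_top hM α).differentiable_top x)]
  simp only [pderiv1_apply_apply (hM.differentiable_top _)]

lemma sum_pderiv1_wedge {w : EuclideanSpace ℝ (Fin m) → EuclideanSpace ℝ (Fin (n + 1))}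
    (hw : ContDiff ℝ (⊤ : ℕ∞) w) (y : EuclideanSpace ℝ (Fin m)) :
    ∑ α, pderiv1 (fun z => wedge (pderiv1 w α z) (w z)) α y = wedge (lap w y) (w y) := by
  ext j k
  have hsum : wedge (lap w y) (w y) j k = ∑ α, wedge (pderiv2 w α α y) (w y) j k := by
    simp only [← inner_planeRotation, lap, sum_inner]
  rw [hsum, Finset.sum_apply, Finset.sum_apply]
  refine Finset.sum_congr rfl fun α _ => ?_
  have hα := contDiff_pderiv1_top hw α
  rw [pderiv1_apply_apply ((contDiff_wedge hα hw).differentiable_top y)]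
  simp only [← inner_planeRotation]
  have hJ : Differentiable ℝ (fun z => planeRotation j k (w z)) :=
    (planeRotation j k).differentiable.comp hw.differentiable_top
  have h := fderiv_inner_apply ℝ (hα.differentiable_top y) (hJ y) (EuclideanSpace.single α 1)
  have e := pderiv1_clm (planeRotation j k) (hw.differentiable_top y) α
  simp only [pderiv1] at e h ⊢
  rw [h, e, inner_planeRotation _ _ (fderiv ℝ w y _)]
  simp [wedge, mul_comm]
  rfl

end Wedge

section Localization

variable {m n : ℕ}

lemma contDiff_bump_smul {F : Type*} [NormedAddCommGroup F] [NormedSpace ℝ F]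
    {x₀ : EuclideanSpace ℝ (Fin m)} (χ : ContDiffBump x₀)
    {U : Set (EuclideanSpace ℝ (Fin m))} (hU : IsOpen U) (hχ : closedBall x₀ χ.rOut ⊆ U)
    {u : EuclideanSpace ℝ (Fin m) → F} (hu : ContDiffOn ℝ (⊤ : ℕ∞) u U) :
    ContDiff ℝ (⊤ : ℕ∞) (fun x => χ x • u x) := by
  rw [contDiff_iff_contDiffAt]
  intro x
  by_cases hx : x ∈ U
  · exact χ.contDiff.contDiffAt.smul (hu.contDiffAt (hU.mem_nhds hx))
  · have hx' : x ∉ tsupport χ := by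
      rw [χ.tsupport_eq]; exact fun h => hx (hχ h)
    refine (contDiffAt_const (c := (0 : F))).congr_of_eventuallyEq ?_
    filter_upwards [notMem_tsupport_iff_eventuallyEq.1 hx'] with y hy
    simp [hy]

lemma IsHMinimizer.setIntegral_energyDensity_le {eps : ℝ} (heps : 0 < eps)
    {U : Set (EuclideanSpace ℝ (Fin m))} (hU : IsOpen U)
    {u : EuclideanSpace ℝ (Fin m) → EuclideanSpace ℝ (Fin (n + 1))} (hu : IsHMinimizer eps u U)
    {B : Set (EuclideanSpace ℝ (Fin m))} (hBo : IsOpen B) (hB : Bornology.IsBounded B)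
    (hBU : B ⊆ U) {w : EuclideanSpace ℝ (Fin m) → EuclideanSpace ℝ (Fin (n + 1))}
    (hw : ContDiff ℝ (⊤ : ℕ∞) w) (huw : Set.EqOn u w B)
    {J : EuclideanSpace ℝ (Fin (n + 1)) →L[ℝ] EuclideanSpace ℝ (Fin (n + 1))}
    (hskew : ∀ a b, ⟪a, J b⟫ = -⟪J a, b⟫) (hcube : ∀ a, J (J (J a)) = -J a)
    {φ : EuclideanSpace ℝ (Fin m) → ℝ} (hφ : ContDiff ℝ (⊤ : ℕ∞) φ) (hφc : HasCompactSupport φ)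
    (hφB : tsupport φ ⊆ B) :
    ∫ x in B, energyDensity eps w x ≤
      ∫ x in B, energyDensity eps (fun y => rotate J (φ y) (w y)) x := by
  obtain ⟨hsm, hone, hfin, hmin⟩ := hu
  set v := fun y => rotate J (φ y) (u y) with hv
  have hvw : ContDiff ℝ (⊤ : ℕ∞) (fun y => rotate J (φ y) (w y)) :=
    contDiff_iff_contDiffAt.2 fun x => hφ.contDiffAt.rotate J hw.contDiffAt
  have hvu : Set.EqOn v u (tsupport φ)ᶜ := fun x hx => by
    simp only [hv, image_eq_zero_of_notMem_tsupport hx, rotate_zero]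
  have hle : HEnergy eps u U ≤ HEnergy eps v U := by
    refine hmin v (fun x hx => ?_) (fun x hx => ?_) ⟨tsupport φ, hφc, hφB.trans hBU, hvu⟩
    · exact (hφ.contDiffAt.rotate J (hsm.contDiffAt (hU.mem_nhds hx))).contDiffWithinAt
    · rw [hv, norm_rotate hskew hcube, hone x hx]
  have hsplit : ∀ f : EuclideanSpace ℝ (Fin m) → EuclideanSpace ℝ (Fin (n + 1)),
      HEnergy eps f U = (∫⁻ x in B, ENNReal.ofReal (energyDensity eps f x)) +
        ∫⁻ x in U \ B, ENNReal.ofReal (energyDensity eps f x) := fun f => by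
    rw [HEnergy, ← lintegral_inter_add_sdiff _ U hBo.measurableSet,
      Set.inter_eq_self_of_subset_right hBU]
    rfl
  have hcongr : ∀ {f g : EuclideanSpace ℝ (Fin m) → EuclideanSpace ℝ (Fin (n + 1))}
      {A : Set (EuclideanSpace ℝ (Fin m))}, IsOpen A → Set.EqOn f g A →
      Set.EqOn (energyDensity eps f) (energyDensity eps g) A := fun hA hfg x hx => by
    simp only [energyDensity, eqOn_lap hA hfg hx, eqOn_gradNorm hA hfg hx]
  have hout : ∫⁻ x in U \ B, ENNReal.ofReal (energyDensity eps v x) =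
      ∫⁻ x in U \ B, ENNReal.ofReal (energyDensity eps u x) :=
    setLIntegral_congr_fun (hU.measurableSet.diff hBo.measurableSet) fun x hx => by
      simp only [hcongr (isClosed_tsupport φ).isOpen_compl hvu (fun h => hx.2 (hφB h))]
  have hin : ∀ {f g : EuclideanSpace ℝ (Fin m) → EuclideanSpace ℝ (Fin (n + 1))},
      Set.EqOn f g B → ContDiff ℝ (⊤ : ℕ∞) g →
      ∫⁻ x in B, ENNReal.ofReal (energyDensity eps f x) =
        ENNReal.ofReal (∫ x in B, energyDensity eps g x) := fun {f g} hfg hg => by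
    rw [ofReal_integral_eq_lintegral_ofReal
      (integrableOn_of_isBounded (continuous_energyDensity eps hg) hB)
      (.of_forall (energyDensity_nonneg heps g))]
    exact setLIntegral_congr_fun hBo.measurableSet fun x hx => by
      simp only [hcongr hBo hfg hx]
  rw [hsplit, hsplit, hout] at hle
  rw [hsplit] at hfin
  have hle' := (ENNReal.add_le_add_iff_right (ENNReal.add_lt_top.1 hfin).2.ne).1 hle
  rw [hin huw hw, hin (g := fun y => rotate J (φ y) (w y))
    (fun x hx => by simp only [hv, huw hx]) hvw] at hle'
  exact (ENNReal.ofReal_le_ofReal_iff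
    (integral_nonneg (energyDensity_nonneg heps _))).1 hle'

end Localization

/-- **Divergence (conservation-law) form of the Euler–Lagrange equation for `H_ε`**
(proof of Proposition 2.4). A smooth constrained minimizer `u` of `H_ε` on an open set
`U` satisfies, pointwise on `U` and entrywise as matrices:
`2Δ(∑_α ∂_α(∂_αu ∧ u)) − 4∑_α ∂_α(Δu ∧ ∂_αu)
  − ε(m+1)∑_α ∂_α(|∇u|^{m-1}(∂_αu ∧ u)) = 0`. -/
theorem divergence_form_equation {m n : ℕ} (hm : 2 ≤ m) (hn : 1 ≤ n)
    (eps : ℝ) (heps : 0 < eps)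
    (U : Set (EuclideanSpace ℝ (Fin m))) (hU : IsOpen U)
    (u : EuclideanSpace ℝ (Fin m) → EuclideanSpace ℝ (Fin (n + 1)))
    (hu : IsHMinimizer eps u U) :
    ∀ x ∈ U,
      (2 : ℝ) • lap (fun y =>
            ∑ α : Fin m, pderiv1 (fun z => wedge (pderiv1 u α z) (u z)) α y) x
        - (4 : ℝ) • (∑ α : Fin m, pderiv1 (fun z => wedge (lap u z) (pderiv1 u α z)) α x)
        - (eps * (m + 1)) •
            (∑ α : Fin m,
              pderiv1 (fun z => gradNorm u z ^ (m - 1) • wedge (pderiv1 u α z) (u z)) α x)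
        = 0 := by
  intro x hx
  obtain ⟨r, hr, hrU⟩ := Metric.nhds_basis_closedBall.mem_iff.1 (hU.mem_nhds hx)
  let χ : ContDiffBump x := ⟨r / 2, r, by positivity, by linarith⟩
  set w : EuclideanSpace ℝ (Fin m) → EuclideanSpace ℝ (Fin (n + 1)) := fun y => χ y • u y with hwdef
  have hw : ContDiff ℝ (⊤ : ℕ∞) w := contDiff_bump_smul χ hU hrU hu.1
  set B := ball x (r / 2) with hBdef
  have hxB : x ∈ B := mem_ball_self (by positivity)
  have hBo : IsOpen B := isOpen_ball
  have hBU : B ⊆ U :=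
    (ball_subset_closedBall.trans (closedBall_subset_closedBall (by linarith))).trans hrU
  have huw : Set.EqOn u w B := fun y hy => by
    have : χ y = 1 := χ.one_of_mem_closedBall (ball_subset_closedBall hy)
    simp [hwdef, this]
  have hd := fun α => eqOn_pderiv1 hBo huw α
  have h1 : lap (fun y => ∑ α, pderiv1 (fun z => wedge (pderiv1 u α z) (u z)) α y) x =
      lap (fun y => wedge (lap w y) (w y)) x := by
    refine eqOn_lap hBo (fun y hy => ?_) hxB
    simp only [← sum_pderiv1_wedge hw]
    refine Finset.sum_congr rfl fun α _ => eqOn_pderiv1 hBo (fun z hz => ?_) α hy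
    simp only [hd α hz, huw hz]
  have h2 : ∀ α, pderiv1 (fun z => wedge (lap u z) (pderiv1 u α z)) α x =
      pderiv1 (fun z => wedge (lap w z) (pderiv1 w α z)) α x := fun α =>
    eqOn_pderiv1 hBo (fun z hz => by simp only [eqOn_lap hBo huw hz, hd α hz]) α hxB
  have h3 : ∀ α, pderiv1 (fun z => gradNorm u z ^ (m - 1) • wedge (pderiv1 u α z) (u z)) α x =
      pderiv1 (fun z => gradNorm w z ^ (m - 1) • wedge (pderiv1 w α z) (w z)) α x := fun α =>
    eqOn_pderiv1 hBo (fun z hz => by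
      simp only [eqOn_gradNorm hBo huw hz, hd α hz, huw hz]) α hxB
  simp only [h1, h2, h3]
  ext j k
  have hEL := euler_lagrange_of_rotate_minimal hm eps (planeRotation_skew j k)
    (planeRotation_cube j k) hw hBo isBounded_ball
    (fun φ hφ hφc hφB => hu.setIntegral_energyDensity_le heps hU hBo isBounded_ball hBU hw huw
      (planeRotation_skew j k) (planeRotation_cube j k) hφ hφc hφB) x hxB
  have hS : ∀ α, ContDiff ℝ 1
      (fun z => gradNorm w z ^ (m - 1) • wedge (pderiv1 w α z) (w z)) := fun α =>
    contDiff_pi.2 fun i => contDiff_pi.2 fun l => by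
      simp only [Pi.smul_apply, smul_eq_mul, ← inner_planeRotation]
      exact contDiff_gradNorm_pow_mul_inner hw
        (((planeRotation i l).contDiff.comp hw).of_le (by simp)) (by omega) α
  have e1 := lap_apply_apply (contDiff_wedge (contDiff_lap hw) hw) x j k
  have e2 : ∀ α, _ := fun α => pderiv1_apply_apply ((contDiff_wedge (contDiff_lap hw)
    (contDiff_pderiv1_top hw α)).differentiable_top x) α j k
  have e3 : ∀ α, _ := fun α => pderiv1_apply_apply ((hS α).differentiable one_ne_zero x) α j k
  simp only [inner_planeRotation] at hEL
  simp only [Pi.sub_apply, Pi.smul_apply, Finset.sum_apply, smul_eq_mul, Pi.zero_apply, e1, e2, e3]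
  exact hEL

end
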